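/- Suppose ‖T_i‖ < 1/2 for all 1 ≤ i ≤ m, each T_i is a scalar multiple of an orthogonal matrix, and Σ_{i=1}^m |det(T_i)|^2 > 1. Then for Lebesgue-almost every a = (a_1,…,a_m) ∈ ℝ^{md}, the self-affine set K^a has non-empty interior. -/

import Mathlib

open MeasureTheory

noncomputable section

namespace SelfAffine

variable {d m : ℕ}

/-- Euclidean operator norm of a `d × d` real matrix. -/
def opNorm (A : Matrix (Fin d) (Fin d) ℝ) : ℝ :=
  ‖Matrix.toEuclideanCLM (𝕜 := ℝ) A‖

/-- smallest singular value of an invertible matrix, via `α_d(A) = ‖A⁻¹‖⁻¹`. -/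
def alphaMin (A : Matrix (Fin d) (Fin d) ℝ) : ℝ := (opNorm A⁻¹)⁻¹

/-- `T_I = T_{i_1} ⋯ T_{i_n}` for a finite word `I ∈ Σ_n`. -/
def wordProd (T : Fin m → Matrix (Fin d) (Fin d) ℝ) {n : ℕ} (I : Fin n → Fin m) :
    Matrix (Fin d) (Fin d) ℝ :=
  (List.ofFn fun k => T (I k)).prod

/-- the coding map `π^a : Σ → ℝ^d`, `π^a(x) = ∑_{n ≥ 0} T_{x|n} a_{x_{n+1}}`. -/
def codingMap (T : Fin m → Matrix (Fin d) (Fin d) ℝ)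
    (a : Fin m → EuclideanSpace ℝ (Fin d)) (x : ℕ → Fin m) : EuclideanSpace ℝ (Fin d) :=
  ∑' n : ℕ, Matrix.toEuclideanCLM (𝕜 := ℝ) (wordProd T fun k : Fin n => x (k : ℕ)) (a (x n))

/-- the self-affine set `K^a = π^a(Σ)`. -/
def attractor (T : Fin m → Matrix (Fin d) (Fin d) ℝ)
    (a : Fin m → EuclideanSpace ℝ (Fin d)) : Set (EuclideanSpace ℝ (Fin d)) :=
  Set.range (codingMap T a)

set_option linter.unusedSectionVars false

section Part1
variable {m : ℕ} {E : Type*} [NormedAddCommGroup E] [InnerProductSpace ℝ E] [FiniteDimensional ℝ E]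

/-- prefix products -/
def pre (A : Fin m → E →L[ℝ] E) (x : ℕ → Fin m) : ℕ → (E →L[ℝ] E)
  | 0 => 1
  | n + 1 => pre A x n * A (x n)

/-- coding map -/
def cod (A : Fin m → E →L[ℝ] E) (a : Fin m → E) (x : ℕ → Fin m) : E :=
  ∑' n, pre A x n (a (x n))

/-- adjoint orbit -/
def adjo (A : Fin m → E →L[ℝ] E) (x : ℕ → Fin m) (n : ℕ) (ξ : E) : E :=
  ContinuousLinearMap.adjoint (pre A x n) ξ

/-- coefficient vectors -/
def cf (A : Fin m → E →L[ℝ] E) (x : ℕ → Fin m) (ξ : E) (i : Fin m) : E :=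
  ∑' n, if x n = i then adjo A x n ξ else 0

lemma pre_congr (A : Fin m → E →L[ℝ] E) {x y : ℕ → Fin m} {n : ℕ} (h : ∀ k < n, x k = y k) :
    pre A x n = pre A y n := by
  induction n with
  | zero => rfl
  | succ n ih => rw [pre, pre, ih fun k hk => h k (by omega), h n (by omega)]

variable {A : Fin m → E →L[ℝ] E} {r : Fin m → ℝ} {ρ : ℝ}

lemma adjo_zero (x : ℕ → Fin m) (ξ : E) : adjo A x 0 ξ = ξ := by
  refine ext_inner_left ℝ fun v => ?_
  rw [adjo, ContinuousLinearMap.adjoint_inner_right]; rfl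

lemma adjo_succ (x : ℕ → Fin m) (n : ℕ) (ξ : E) :
    adjo A x (n+1) ξ = ContinuousLinearMap.adjoint (A (x n)) (adjo A x n ξ) := by
  refine ext_inner_left ℝ fun v => ?_
  simp only [adjo, ContinuousLinearMap.adjoint_inner_right]; rfl

lemma norm_adjo (hadj : ∀ i v, ‖ContinuousLinearMap.adjoint (A i) v‖ = r i * ‖v‖)
    (x : ℕ → Fin m) (n : ℕ) (ξ : E) :
    ‖adjo A x n ξ‖ = (∏ k ∈ Finset.range n, r (x k)) * ‖ξ‖ := by
  induction n with
  | zero => simp [adjo_zero]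
  | succ n ih => rw [adjo_succ, hadj, ih, Finset.prod_range_succ]; ring

lemma norm_adjo_add (hadj : ∀ i v, ‖ContinuousLinearMap.adjoint (A i) v‖ = r i * ‖v‖)
    (hρ : ∀ i, r i ≤ ρ) (hρ0 : 0 ≤ ρ)
    (x : ℕ → Fin m) (n l : ℕ) (ξ : E) :
    ‖adjo A x (n + l) ξ‖ ≤ ρ ^ l * ‖adjo A x n ξ‖ := by
  induction l with
  | zero => simp
  | succ l ih =>
    rw [← add_assoc, adjo_succ, hadj, pow_succ]
    calc r (x (n+l)) * ‖adjo A x (n + l) ξ‖ ≤ ρ * (ρ ^ l * ‖adjo A x n ξ‖) := by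
          gcongr; exact hρ _
      _ = _ := by ring

lemma norm_pre (hA : ∀ i v, ‖A i v‖ ≤ r i * ‖v‖) (hρ : ∀ i, r i ≤ ρ) (hρ0 : 0 ≤ ρ)
    (x : ℕ → Fin m) (n : ℕ) (v : E) : ‖pre A x n v‖ ≤ ρ ^ n * ‖v‖ := by
  induction n generalizing v with
  | zero => simp [pre]
  | succ n ih =>
    calc ‖pre A x (n+1) v‖ = ‖pre A x n (A (x n) v)‖ := rfl
      _ ≤ ρ ^ n * (ρ * ‖v‖) := by
        refine (ih _).trans ?_
        gcongr
        refine (hA _ _).trans ?_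
        gcongr; exact hρ _
      _ = _ := by ring

lemma continuous_cod (hA : ∀ i v, ‖A i v‖ ≤ r i * ‖v‖) (hρ : ∀ i, r i ≤ ρ) (hρ0 : 0 ≤ ρ)
    (hρ1 : ρ < 1) : Continuous fun p : (Fin m → E) × (ℕ → Fin m) => cod A p.1 p.2 := by
  rw [continuous_iff_continuousAt]
  rintro ⟨a, x⟩
  have : ContinuousOn (fun p : (Fin m → E) × (ℕ → Fin m) => cod A p.1 p.2)
      {p | ‖p.1‖ < ‖a‖ + 1} := by
    unfold cod
    refine continuousOn_tsum (u := fun n => ρ ^ n * (‖a‖ + 1)) (fun n => ?_)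
      ((summable_geometric_of_lt_one hρ0 hρ1).mul_right _) ?_
    · refine Continuous.continuousOn ?_
      let F : (Fin m → E) × ((Fin (n+1)) → Fin m) → E := fun q =>
        if h : 0 < m then
          pre A (fun k => if hk : k < n + 1 then q.2 ⟨k, hk⟩ else ⟨0, h⟩) n (q.1 (q.2 (Fin.last n)))
        else 0
      have hF : Continuous F := by
        rw [continuous_prod_of_discrete_right]
        intro b
        by_cases h : 0 < m
        · simp only [F, h, dite_true]; fun_prop
        · simp only [F, h, dite_false]; fun_prop
      have hG : Continuous (fun p : (Fin m → E) × (ℕ → Fin m) =>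
          ((p.1, fun k : Fin (n+1) => p.2 k) : (Fin m → E) × ((Fin (n+1)) → Fin m))) := by
        fun_prop
      convert! hF.comp hG using 1
      ext1 p
      have h : 0 < m := (p.2 0).pos
      simp only [F, Function.comp, h, dite_true, Fin.val_last]
      congr 1
      apply pre_congr
      intro k hk
      simp [show k < n + 1 by omega]
    · rintro n ⟨b, y⟩ hb
      refine (norm_pre hA hρ hρ0 _ _ _).trans ?_
      gcongr
      exact (norm_le_pi_norm b _).trans (le_of_lt hb)
  refine this.continuousAt (IsOpen.mem_nhds ?_ ?_)
  · exact isOpen_lt (by fun_prop) continuous_const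
  · simp

lemma summable_adjo (hadj : ∀ i v, ‖ContinuousLinearMap.adjoint (A i) v‖ = r i * ‖v‖)
    (hρ : ∀ i, r i ≤ ρ) (hρ0 : 0 ≤ ρ) (hρ1 : ρ < 1)
    (x : ℕ → Fin m) (ξ : E) (i : Fin m) :
    Summable fun n => if x n = i then adjo A x n ξ else 0 := by
  refine Summable.of_norm_bounded (g := fun n => ρ ^ n * ‖ξ‖)
    ((summable_geometric_of_lt_one hρ0 hρ1).mul_right _) fun n => ?_
  have := norm_adjo_add hadj hρ hρ0 x 0 n ξ
  rw [zero_add, adjo_zero] at this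
  split_ifs
  · exact this
  · rw [norm_zero]; positivity

lemma inner_cod (hA : ∀ i v, ‖A i v‖ ≤ r i * ‖v‖)
    (hadj : ∀ i v, ‖ContinuousLinearMap.adjoint (A i) v‖ = r i * ‖v‖)
    (hρ : ∀ i, r i ≤ ρ) (hρ0 : 0 ≤ ρ) (hρ1 : ρ < 1) (a : Fin m → E)
    (x : ℕ → Fin m) (ξ : E) : inner ℝ ξ (cod A a x) = ∑ i, inner ℝ (cf A x ξ i) (a i) := by
  have h1 : Summable fun n => pre A x n (a (x n)) := by
    refine Summable.of_norm_bounded (g := fun n => ρ ^ n * ‖a‖)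
      ((summable_geometric_of_lt_one hρ0 hρ1).mul_right _) fun n => ?_
    refine (norm_pre hA hρ hρ0 _ _ _).trans ?_
    gcongr
    exact norm_le_pi_norm a _
  have h2 : HasSum (fun n => inner ℝ ξ (pre A x n (a (x n)))) (inner ℝ ξ (cod A a x)) :=
    h1.hasSum.mapL (innerSL ℝ ξ)
  have h3 : ∀ i, HasSum (fun n => inner ℝ (if x n = i then adjo A x n ξ else 0) (a i))
      (inner ℝ (cf A x ξ i) (a i)) := fun i => by
    have := (summable_adjo hadj hρ hρ0 hρ1 x ξ i).hasSum.mapL (innerSL ℝ (a i))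
    simpa [real_inner_comm, cf] using this
  have h4 := hasSum_sum (s := Finset.univ) fun i _ => h3 i
  refine h2.unique ?_
  convert! h4 using 2 with n
  rw [Finset.sum_eq_single (x n)]
  · simp [adjo, ContinuousLinearMap.adjoint_inner_left]
  · intro b _ hb; simp [hb.symm]
  · simp

lemma cf_lower (hadj : ∀ i v, ‖ContinuousLinearMap.adjoint (A i) v‖ = r i * ‖v‖)
    (hρ : ∀ i, r i ≤ ρ) (hρ0 : 0 ≤ ρ) (hρ1 : ρ < 1) {x y : ℕ → Fin m} {n : ℕ}
    (h : ∀ k < n, x k = y k) (hn : x n ≠ y n) (ξ : E) :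
    (2 - 2 * (ρ / (1 - ρ))) * ‖adjo A x n ξ‖ ≤
      ‖(cf A x ξ (x n) - cf A y ξ (x n)) - (cf A x ξ (y n) - cf A y ξ (y n))‖ := by
  set S := adjo A x n ξ
  have hSy : adjo A y n ξ = S := by simp only [S, adjo, pre_congr A h]
  have sm := fun z i => summable_adjo hadj hρ hρ0 hρ1 z ξ i
  let f : ℕ → E := fun k =>
    ((if x k = x n then adjo A x k ξ else 0) - (if y k = x n then adjo A y k ξ else 0)) -
    ((if x k = y n then adjo A x k ξ else 0) - (if y k = y n then adjo A y k ξ else 0))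
  have hf : HasSum f ((cf A x ξ (x n) - cf A y ξ (x n)) - (cf A x ξ (y n) - cf A y ξ (y n))) :=
    ((sm _ _).hasSum.sub (sm _ _).hasSum).sub ((sm _ _).hasSum.sub (sm _ _).hasSum)
  rw [← hf.tsum_eq, ← hf.summable.sum_add_tsum_nat_add (n+1), Finset.sum_range_succ]
  have h0 : ∑ k ∈ Finset.range n, f k = 0 := by
    refine Finset.sum_eq_zero fun k hk => ?_
    have hk := Finset.mem_range.1 hk
    have : adjo A x k ξ = adjo A y k ξ := by
      simp only [adjo, pre_congr A (fun j hj => h j (hj.trans hk))]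
    simp only [f, h k hk, this]; simp
  have h1 : f n = (2:ℝ) • S := by
    simp only [f, hSy, hn, hn.symm, if_true, if_false]
    rw [two_smul]; abel
  have ht : ‖∑' k, f (k + (n+1))‖ ≤ 2 * (ρ / (1 - ρ)) * ‖S‖ := by
    have hg : HasSum (fun k => 2 * ρ ^ k * ρ * ‖S‖) (2 * (ρ / (1 - ρ)) * ‖S‖) := by
      have := (((hasSum_geometric_of_lt_one hρ0 hρ1).mul_left 2).mul_right ρ).mul_right ‖S‖
      convert! this using 1
      ring
    refine tsum_of_norm_bounded hg fun k => ?_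
    have e1 := norm_adjo_add hadj hρ hρ0 x n (k+1) ξ
    have e2 := norm_adjo_add hadj hρ hρ0 y n (k+1) ξ
    rw [hSy] at e2
    rw [show n + (k+1) = k + (n+1) by ring, pow_succ] at e1 e2
    have e3 : f (k + (n+1)) =
      ((if x (k + (n+1)) = x n then adjo A x (k + (n+1)) ξ else 0) -
        (if x (k + (n+1)) = y n then adjo A x (k + (n+1)) ξ else 0)) -
      ((if y (k + (n+1)) = x n then adjo A y (k + (n+1)) ξ else 0) -
        (if y (k + (n+1)) = y n then adjo A y (k + (n+1)) ξ else 0)) := by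
      simp only [f]; abel
    have key : ∀ (u : E) (z : Fin m),
        ‖(if z = x n then u else 0) - (if z = y n then u else 0)‖ ≤ ‖u‖ := by
      intro u z
      by_cases c1 : z = x n
      · have c2 : z ≠ y n := by rw [c1]; exact hn
        simp [c1, hn]
      · by_cases c2 : z = y n
        · simp [c2, hn.symm]
        · simp [c1, c2]
    rw [e3]
    refine (norm_sub_le _ _).trans ?_
    have := key (adjo A x (k + (n+1)) ξ) (x (k + (n+1)))
    have := key (adjo A y (k + (n+1)) ξ) (y (k + (n+1)))
    linarith
  rw [h0, h1, zero_add]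
  have e4 := norm_sub_le ((2:ℝ) • S + ∑' k, f (k + (n+1))) (∑' k, f (k + (n+1)))
  rw [add_sub_cancel_right, norm_smul] at e4
  simp only [Real.norm_ofNat] at e4
  linarith

lemma sum_sq_lower (w : Fin m → E) {i j : Fin m} (hij : i ≠ j) :
    ‖w i - w j‖ ^ 2 / 2 ≤ ∑ k, ‖w k‖ ^ 2 := by
  have h1 : ‖w i‖ ^ 2 + ‖w j‖ ^ 2 ≤ ∑ k, ‖w k‖ ^ 2 := by
    rw [← Finset.sum_pair (f := fun k => ‖w k‖ ^ 2) hij]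
    exact Finset.sum_le_sum_of_subset_of_nonneg (Finset.subset_univ _) fun _ _ _ => by positivity
  have h2 := norm_sub_le (w i) (w j)
  have h3 : ‖w i - w j‖ ^ 2 ≤ (‖w i‖ + ‖w j‖) ^ 2 := by gcongr
  nlinarith [sq_nonneg (‖w i‖ - ‖w j‖)]

end Part1

section Part2
open FourierTransform
open scoped ContDiff SchwartzMap

variable {d : ℕ} {Ω : Type*} [MeasurableSpace Ω]

lemma integral_eq_of_integrable_char (μ : Measure Ω) [IsProbabilityMeasure μ]
    (X : Ω → EuclideanSpace ℝ (Fin d)) (hX : Measurable X)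
    (hφ : Integrable fun ξ : EuclideanSpace ℝ (Fin d) =>
      ∫ z, ((Real.fourierChar (inner ℝ ξ (X z)) : Circle) : ℂ) ∂μ)
    (g : 𝓢(EuclideanSpace ℝ (Fin d), ℂ)) :
    ∫ z, g (X z) ∂μ = ∫ x, g x * 𝓕 (fun ξ : EuclideanSpace ℝ (Fin d) =>
      ∫ z, ((Real.fourierChar (inner ℝ ξ (X z)) : Circle) : ℂ) ∂μ) x := by
  have hg : Integrable (g : EuclideanSpace ℝ (Fin d) → ℂ) := g.integrable
  have hg' : Integrable (𝓕 (g : EuclideanSpace ℝ (Fin d) → ℂ)) := by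
    rw [← SchwartzMap.fourier_coe]; exact (𝓕 g).integrable
  have hinv := g.continuous.fourierInv_fourier_eq hg hg'
  have e1 : ∀ z, g (X z) = ∫ ξ, ((Real.fourierChar (inner ℝ ξ (X z)) : Circle) : ℂ) *
      𝓕 (g : EuclideanSpace ℝ (Fin d) → ℂ) ξ := by
    intro z
    conv_lhs => rw [← hinv]
    rw [Real.fourierInv_eq]
    rfl
  have e2 := VectorFourier.integral_fourierIntegral_smul_eq_flip
    (L := innerₗ (EuclideanSpace ℝ (Fin d)))
      Real.continuous_fourierChar continuous_inner hg hφ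
  simp only [e1]
  rw [integral_integral_swap]
  · simp only [integral_mul_const]
    simp only [smul_eq_mul, flip_innerₗ] at e2
    refine Eq.trans ?_ e2
    refine integral_congr_ae (Filter.Eventually.of_forall fun ξ => ?_)
    simp only
    rw [mul_comm]; rfl
  · have h1 : Integrable (fun p : Ω × EuclideanSpace ℝ (Fin d) =>
        𝓕 (g : EuclideanSpace ℝ (Fin d) → ℂ) p.2) (μ.prod volume) := hg'.comp_snd μ
    have h2 : Measurable fun p : Ω × EuclideanSpace ℝ (Fin d) =>
      ((Real.fourierChar (inner ℝ p.2 (X p.1)) : Circle) : ℂ) := by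
      have : Continuous fun t : ℝ => ((Real.fourierChar t : Circle) : ℂ) := by fun_prop
      exact this.measurable.comp (by fun_prop)
    refine h1.mono (h2.aestronglyMeasurable.mul h1.aestronglyMeasurable) ?_
    refine Filter.Eventually.of_forall fun p => ?_
    simp only [Function.uncurry, norm_mul]
    rw [Circle.norm_coe, one_mul]

lemma interior_nonempty_of_integrable_char (μ : Measure Ω) [IsProbabilityMeasure μ]
    (X : Ω → EuclideanSpace ℝ (Fin d)) (hX : Measurable X)
    (hφ : Integrable fun ξ : EuclideanSpace ℝ (Fin d) =>
      ∫ z, ((Real.fourierChar (inner ℝ ξ (X z)) : Circle) : ℂ) ∂μ)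
    {K : Set (EuclideanSpace ℝ (Fin d))} (hK : IsCompact K) (hXK : ∀ z, X z ∈ K) :
    (interior K).Nonempty := by
  by_contra hne
  rw [Set.not_nonempty_iff_eq_empty, interior_eq_empty_iff_dense_compl] at hne
  set φ := fun ξ : EuclideanSpace ℝ (Fin d) =>
      ∫ z, ((Real.fourierChar (inner ℝ ξ (X z)) : Circle) : ℂ) ∂μ with hφdef
  have hcont : Continuous (𝓕 φ) :=
    VectorFourier.fourierIntegral_continuous Real.continuous_fourierChar continuous_inner hφ
  have key : ∀ (g : EuclideanSpace ℝ (Fin d) → ℝ), ContDiff ℝ ∞ g → HasCompactSupport g →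
      ((∫ z, g (X z) ∂μ : ℝ) : ℂ) = ∫ x, g x • 𝓕 φ x := by
    intro g hg hgc
    have c1 : HasCompactSupport (fun x => (g x : ℂ)) := hgc.comp_left (g := Complex.ofReal) rfl
    have c2 : ContDiff ℝ ∞ (fun x => (g x : ℂ)) := Complex.ofRealCLM.contDiff.comp hg
    have := integral_eq_of_integrable_char μ X hX hφ (c1.toSchwartzMap c2)
    rw [← integral_complex_ofReal]
    simpa using! this
  have hz : ∀ᵐ x ∂(volume : Measure (EuclideanSpace ℝ (Fin d))), x ∈ Kᶜ → 𝓕 φ x = 0 := by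
    refine IsOpen.ae_eq_zero_of_integral_contDiff_smul_eq_zero hK.isClosed.isOpen_compl
      (hcont.locallyIntegrable.locallyIntegrableOn _) fun g hg hgc hgs => ?_
    rw [← key g hg hgc]
    have : ∀ z, g (X z) = 0 := fun z => by
      by_contra h
      exact hgs (subset_tsupport _ h) (hXK z)
    simp [this]
  have hz2 : Set.EqOn (𝓕 φ) 0 Kᶜ := by
    have := Measure.eqOn_open_of_ae_eq (μ := volume) (U := Kᶜ) (f := 𝓕 φ) (g := 0)
      ((ae_restrict_iff' hK.isClosed.isOpen_compl.measurableSet).2 hz)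
      hK.isClosed.isOpen_compl hcont.continuousOn continuousOn_const
    exact this
  have hz3 : 𝓕 φ = 0 := Continuous.ext_on hne hcont continuous_const hz2
  obtain ⟨R, hR⟩ := hK.isBounded.subset_ball_lt 0 0
  let f : ContDiffBump (0 : EuclideanSpace ℝ (Fin d)) := ⟨R, R + 1, hR.1, by linarith⟩
  have h1 := key f f.contDiff f.hasCompactSupport
  have h2 : ∀ z, f (X z) = 1 := fun z =>
    f.one_of_mem_closedBall (Metric.ball_subset_closedBall (hR.2 (hXK z)))
  rw [hz3] at h1
  simp [h2] at h1

end Part2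

section Part3
open scoped ENNReal

variable {m : ℕ}

/-- the prefix energy kernel -/
def hker (r : Fin m → ℝ) (q : ℝ) (x y : ℕ → Fin m) : ℝ≥0∞ :=
  ∑' n : ℕ, if ∀ k < n, x k = y k then
    ENNReal.ofReal ((∏ k ∈ Finset.range n, r (x k)) ^ (-q)) else 0

lemma exp_bound {κ q u s : ℝ} (hκ : 0 < κ) (hq : 0 ≤ q) (hu : 0 ≤ u) (hs : 0 < s) (hs1 : s ≤ 1) :
    Real.exp (-κ * (s * u) ^ 2) ≤ Real.exp (q ^ 2 / (4 * κ)) * (1 + u) ^ (-q) * s ^ (-q) := by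
  have h1 : Real.exp (-κ * (s * u) ^ 2) * (1 + s * u) ^ q ≤ Real.exp (q ^ 2 / (4 * κ)) := by
    have h2 : (1 + s * u) ^ q ≤ Real.exp (s * u * q) := by
      rw [Real.exp_mul]
      refine Real.rpow_le_rpow (by positivity) ?_ hq
      linarith [Real.add_one_le_exp (s * u)]
    calc _ ≤ Real.exp (-κ * (s * u) ^ 2) * Real.exp (s * u * q) := by gcongr
      _ = Real.exp (-κ * (s * u) ^ 2 + s * u * q) := by rw [Real.exp_add]
      _ ≤ _ := by
        apply Real.exp_le_exp.2
        rw [le_div_iff₀ (by positivity)]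
        nlinarith [sq_nonneg (2 * κ * (s * u) - q)]
  have h3 : (s * (1 + u)) ^ q ≤ (1 + s * u) ^ q :=
    Real.rpow_le_rpow (by positivity) (by nlinarith) hq
  rw [Real.mul_rpow hs.le (by positivity)] at h3
  have h4 : Real.exp (-κ * (s * u) ^ 2) * (s ^ q * (1 + u) ^ q) ≤ Real.exp (q ^ 2 / (4 * κ)) :=
    le_trans (by gcongr) h1
  rw [Real.rpow_neg hs.le, Real.rpow_neg (by positivity)]
  have p1 : 0 < s ^ q := Real.rpow_pos_of_pos hs q
  have p2 : 0 < (1 + u) ^ q := Real.rpow_pos_of_pos (by positivity) q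
  rw [← div_eq_mul_inv, ← div_eq_mul_inv, div_div, le_div_iff₀ (by positivity)]
  linarith [mul_comm ((1 + u) ^ q) (s ^ q)]

lemma hker_diag {r : Fin m → ℝ} (hr0 : ∀ i, 0 < r i) (hr1 : ∀ i, r i ≤ 1) {q : ℝ} (hq : 0 ≤ q)
    (x : ℕ → Fin m) : hker r q x x = ∞ := by
  have : ∑' n : ℕ, (1 : ℝ≥0∞) ≤ hker r q x x := by
    refine ENNReal.tsum_le_tsum fun n => ?_
    simp only [implies_true, if_true]
    rw [← ENNReal.ofReal_one]
    refine ENNReal.ofReal_le_ofReal ?_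
    exact Real.one_le_rpow_of_pos_of_le_one_of_nonpos (Finset.prod_pos fun k _ => hr0 _)
      (Finset.prod_le_one (fun k _ => (hr0 _).le) fun k _ => hr1 _) (by linarith)
  rw [ENNReal.tsum_const_eq_top_of_ne_zero one_ne_zero] at this
  exact top_unique this

lemma le_hker (r : Fin m → ℝ) (q : ℝ) {x y : ℕ → Fin m} {n : ℕ} (h : ∀ k < n, x k = y k) :
    ENNReal.ofReal ((∏ k ∈ Finset.range n, r (x k)) ^ (-q)) ≤ hker r q x y := by
  refine le_trans ?_ (ENNReal.le_tsum n)
  rw [if_pos h]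

lemma measurable_hker (r : Fin m → ℝ) (q : ℝ) :
    Measurable fun p : (ℕ → Fin m) × (ℕ → Fin m) => hker r q p.1 p.2 := by
  unfold hker
  refine Measurable.tsum fun n => ?_
  refine Measurable.ite ?_ ?_ measurable_const
  · simp only [Set.ofPred_forall]
    refine MeasurableSet.iInter fun k => MeasurableSet.iInter fun _ => ?_
    exact measurableSet_eq_fun (by fun_prop) (by fun_prop)
  · refine ENNReal.measurable_ofReal.comp ?_
    refine Measurable.pow_const ?_ _
    refine Finset.measurable_prod _ fun k _ => ?_
    exact (measurable_of_countable r).comp (by fun_prop)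

/-- the Bernoulli measure -/
def bern (p : PMF (Fin m)) : Measure (ℕ → Fin m) := Measure.infinitePi fun _ => p.toMeasure

instance (p : PMF (Fin m)) : IsProbabilityMeasure (bern p) := by unfold bern; infer_instance

lemma bern_cyl (p : PMF (Fin m)) (n : ℕ) (w : Fin n → Fin m) :
    bern p {x | ∀ k : Fin n, x k = w k} = ∏ k, p (w k) := by
  by_cases hm : 0 < m
  · have : {x : ℕ → Fin m | ∀ k : Fin n, x k = w k} =
      Set.pi (Finset.range n) (fun k => if hk : k < n then {w ⟨k, hk⟩} else Set.univ) := by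
      ext x
      simp only [Set.mem_ofPred_eq, Set.mem_pi, Finset.coe_range, Set.mem_Iio]
      constructor
      · intro h k hk
        simp [hk, h ⟨k, hk⟩]
      · intro h k
        simpa using h k k.2
    rw [this, bern, Measure.infinitePi_pi _ (fun k _ => MeasurableSet.of_discrete),
      ← Fin.prod_univ_eq_prod_range (fun k => p.toMeasure (if hk : k < n then {w ⟨k, hk⟩} else Set.univ)) n]
    refine Finset.prod_congr rfl fun k _ => ?_
    simp
  · exact absurd (p.support_nonempty.some).pos hm

lemma lintegral_hker (p : PMF (Fin m)) (r : Fin m → ℝ) (hr0 : ∀ i, 0 < r i) (q : ℝ) :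
    ∫⁻ x, ∫⁻ y, hker r q x y ∂bern p ∂bern p =
      ∑' n : ℕ, (∑ i, p i ^ 2 * ENNReal.ofReal (r i ^ (-q))) ^ n := by
  have hind : ∀ n (w : Fin n → Fin m),
      MeasurableSet {x : ℕ → Fin m | ∀ k : Fin n, x k = w k} := fun n w => by
    simp only [Set.ofPred_forall]
    refine MeasurableSet.iInter fun k => ?_
    exact measurableSet_eq_fun (by fun_prop) (by fun_prop)
  have h1 : ∀ x y, hker r q x y = ∑' n : ℕ, ∑ w : Fin n → Fin m,
      ENNReal.ofReal ((∏ k, r (w k)) ^ (-q)) *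
        ({x | ∀ k : Fin n, x k = w k}.indicator 1 x * {x | ∀ k : Fin n, x k = w k}.indicator 1 y) := by
    intro x y
    unfold hker
    refine tsum_congr fun n => ?_
    rw [Finset.sum_eq_single (fun k : Fin n => x k)]
    · rw [Fin.prod_univ_eq_prod_range (fun k => r (x k)) n]
      have : (∀ k : Fin n, y k = x k) ↔ ∀ k < n, x k = y k :=
        ⟨fun h k hk => (h ⟨k, hk⟩).symm, fun h k => (h k k.2).symm⟩
      simp [Set.indicator, this]
    · intro w _ hw
      have : ¬ ∀ k : Fin n, x k = w k := fun h => hw (funext fun k => (h k).symm)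
      simp [Set.indicator, this]
    · simp
  simp only [h1]
  have m1 : ∀ n (w : Fin n → Fin m), Measurable
      ({x : ℕ → Fin m | ∀ k : Fin n, x k = w k}.indicator (1 : (ℕ → Fin m) → ℝ≥0∞)) :=
    fun n w => measurable_one.indicator (hind n w)
  have h2 : ∀ x : ℕ → Fin m, ∫⁻ y : ℕ → Fin m, (∑' n : ℕ, ∑ w : Fin n → Fin m,
      ENNReal.ofReal ((∏ k, r (w k)) ^ (-q)) *
        ({x : ℕ → Fin m | ∀ k : Fin n, x k = w k}.indicator 1 x *
          {x : ℕ → Fin m | ∀ k : Fin n, x k = w k}.indicator 1 y)) ∂bern p =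
      ∑' n : ℕ, ∑ w : Fin n → Fin m, ENNReal.ofReal ((∏ k, r (w k)) ^ (-q)) *
        ({x : ℕ → Fin m | ∀ k : Fin n, x k = w k}.indicator 1 x * ∏ k, p (w k)) := by
    intro x
    rw [lintegral_tsum]
    · refine tsum_congr fun n => ?_
      rw [lintegral_finsetSum]
      · refine Finset.sum_congr rfl fun w _ => ?_
        rw [lintegral_const_mul _ ((m1 n w).const_mul _), lintegral_const_mul _ (m1 n w),
          lintegral_indicator_one (hind n w), bern_cyl]
      · exact fun w _ => ((m1 n w).const_mul _).const_mul _
    · exact fun n => (Finset.measurable_sum _ fun w _ =>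
        ((m1 n w).const_mul _).const_mul _).aemeasurable
  simp only [h2]
  rw [lintegral_tsum]
  · refine tsum_congr fun n => ?_
    rw [lintegral_finsetSum]
    · rw [← Finset.card_fin n, ← Finset.prod_const, Finset.card_fin, Fintype.prod_sum]
      refine Finset.sum_congr rfl fun w _ => ?_
      rw [lintegral_const_mul _ ((m1 n w).mul_const _), lintegral_mul_const _ (m1 n w),
        lintegral_indicator_one (hind n w), bern_cyl, Finset.prod_mul_distrib,
        ← Real.finsetProd_rpow _ _ (fun k _ => (hr0 _).le),
        ENNReal.ofReal_prod_of_nonneg fun k _ => Real.rpow_nonneg (hr0 _).le _, Finset.prod_pow]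
      ring
    · exact fun w _ => ((m1 n w).mul_const _).const_mul _
  · exact fun n => (Finset.measurable_sum _ fun w _ =>
        ((m1 n w).mul_const _).const_mul _).aemeasurable

end Part3

section Part4
open scoped ENNReal ComplexConjugate
open FourierTransform

variable {d m : ℕ}

/-- characteristic function -/
def phi (A : Fin m → EuclideanSpace ℝ (Fin d) →L[ℝ] EuclideanSpace ℝ (Fin d)) (p : PMF (Fin m))
    (a : Fin m → EuclideanSpace ℝ (Fin d)) (ξ : EuclideanSpace ℝ (Fin d)) : ℂ :=
  ∫ x, ((Real.fourierChar (inner ℝ ξ (cod A a x)) : Circle) : ℂ) ∂bern p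

/-- Gaussian weight -/
def gw (a : Fin m → EuclideanSpace ℝ (Fin d)) : ℝ := ∏ i, Real.exp (-‖a i‖ ^ 2)

lemma gw_pos (a : Fin m → EuclideanSpace ℝ (Fin d)) : 0 < gw a :=
  Finset.prod_pos fun _ _ => Real.exp_pos _

lemma gw_integrable : Integrable (gw : (Fin m → EuclideanSpace ℝ (Fin d)) → ℝ) := by
  unfold gw
  refine Integrable.fintype_prod (f := fun _ (v : EuclideanSpace ℝ (Fin d)) => Real.exp (-‖v‖ ^ 2))
    fun i => ?_
  have := (GaussianFourier.integrable_cexp_neg_mul_sq_norm_add (V := EuclideanSpace ℝ (Fin d))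
    (b := 1) (by simp) 0 0).re
  refine this.congr (Filter.Eventually.of_forall fun v => ?_)
  have : (-1 * (‖v‖:ℂ) ^ 2 + 0 * ((inner ℝ (0 : EuclideanSpace ℝ (Fin d)) v : ℝ) : ℂ))
    = ((-‖v‖ ^ 2 : ℝ) : ℂ) := by push_cast; ring
  simp only [this, ← Complex.ofReal_exp]
  rfl

/-- a constant -/
def gc (d : ℕ) : ℂ :=
  ((Real.pi : ℂ) / 1) ^ (Module.finrank ℝ (EuclideanSpace ℝ (Fin d)) / 2 : ℂ)

lemma gauss_int (w : Fin m → EuclideanSpace ℝ (Fin d)) :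
    ∫ a : Fin m → EuclideanSpace ℝ (Fin d), (gw a : ℂ) *
      ((Real.fourierChar (∑ i, inner ℝ (w i) (a i)) : Circle) : ℂ) =
      gc d ^ m * ((Real.exp (-Real.pi ^ 2 * ∑ i, ‖w i‖ ^ 2) : ℝ) : ℂ) := by
  have h1 : ∀ a : Fin m → EuclideanSpace ℝ (Fin d), (gw a : ℂ) *
      ((Real.fourierChar (∑ i, inner ℝ (w i) (a i)) : Circle) : ℂ) =
      ∏ i, Complex.exp (-1 * (‖a i‖ : ℂ) ^ 2 + (2 * Real.pi * Complex.I) *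
        ((inner ℝ (w i) (a i) : ℝ) : ℂ)) := by
    intro a
    rw [gw, Real.fourierChar_apply]
    push_cast
    rw [← Complex.exp_sum, ← Complex.exp_sum, ← Complex.exp_add, Finset.sum_add_distrib,
      ← Finset.mul_sum, ← Finset.mul_sum]
    congr 2
    · simp
    · ring
  simp only [h1]
  rw [integral_fintype_prod_volume_eq_prod
    (f := fun i (v : EuclideanSpace ℝ (Fin d)) => Complex.exp (-1 * (‖v‖ : ℂ) ^ 2 +
      (2 * Real.pi * Complex.I) * ((inner ℝ (w i) v : ℝ) : ℂ)))]
  have h2 : ∀ i, ∫ v : EuclideanSpace ℝ (Fin d), Complex.exp (-1 * (‖v‖ : ℂ) ^ 2 +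
      (2 * Real.pi * Complex.I) * ((inner ℝ (w i) v : ℝ) : ℂ)) =
      gc d * Complex.exp (-Real.pi ^ 2 * ‖w i‖ ^ 2) := by
    intro i
    rw [GaussianFourier.integral_cexp_neg_mul_sq_norm_add (by simp), gc]
    congr 2
    linear_combination (Real.pi ^ 2 * ‖w i‖ ^ 2 : ℂ) * Complex.I_sq
  simp only [h2]
  rw [Finset.prod_mul_distrib, Finset.prod_const, Finset.card_univ, Fintype.card_fin,
    ← Complex.exp_sum, ← Finset.mul_sum]
  push_cast
  rfl

variable {A : Fin m → EuclideanSpace ℝ (Fin d) →L[ℝ] EuclideanSpace ℝ (Fin d)}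
  {r : Fin m → ℝ} {ρ : ℝ}

lemma continuous_char : Continuous fun t : ℝ => ((Real.fourierChar t : Circle) : ℂ) := by fun_prop

lemma norm_phi_sq (p : PMF (Fin m)) (a : Fin m → EuclideanSpace ℝ (Fin d))
    (ξ : EuclideanSpace ℝ (Fin d)) :
    ((‖phi A p a ξ‖ ^ 2 : ℝ) : ℂ) = ∫ z : (ℕ → Fin m) × (ℕ → Fin m),
      ((Real.fourierChar (inner ℝ ξ (cod A a z.1) - inner ℝ ξ (cod A a z.2)) : Circle) : ℂ)
        ∂((bern p).prod (bern p)) := by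
  have h1 : ((‖phi A p a ξ‖ ^ 2 : ℝ) : ℂ) = phi A p a ξ * conj (phi A p a ξ) := by
    rw [Complex.mul_conj, Complex.normSq_eq_norm_sq]
  rw [h1, phi, ← integral_conj, ← integral_prod_mul]
  refine integral_congr_ae (Filter.Eventually.of_forall fun z => ?_)
  simp only [sub_eq_add_neg, AddChar.map_add_eq_mul, AddChar.map_neg_eq_inv, Circle.coe_mul,
    Circle.coe_inv_eq_conj]

lemma energy_le (hA : ∀ i v, ‖A i v‖ ≤ r i * ‖v‖)
    (hadj : ∀ i v, ‖ContinuousLinearMap.adjoint (A i) v‖ = r i * ‖v‖)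
    (hρ : ∀ i, r i ≤ ρ) (hρ0 : 0 ≤ ρ) (hρ1 : ρ < 1) (p : PMF (Fin m))
    (ξ : EuclideanSpace ℝ (Fin d)) :
    ∫⁻ a, ENNReal.ofReal (gw a * ‖phi A p a ξ‖ ^ 2) ≤
      ∫⁻ z : (ℕ → Fin m) × (ℕ → Fin m), ENNReal.ofReal (‖gc d ^ m‖ *
        Real.exp (-Real.pi ^ 2 * ∑ i, ‖cf A z.1 ξ i - cf A z.2 ξ i‖ ^ 2))
          ∂((bern p).prod (bern p)) := by
  have hc := continuous_cod hA hρ hρ0 hρ1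
  have hF : Measurable fun u : (Fin m → EuclideanSpace ℝ (Fin d)) × ((ℕ → Fin m) × (ℕ → Fin m)) =>
      ((Real.fourierChar (inner ℝ ξ (cod A u.1 u.2.1) - inner ℝ ξ (cod A u.1 u.2.2)) : Circle) : ℂ) := by
    refine (continuous_char.comp ?_).measurable
    have c1 : Continuous fun u : (Fin m → EuclideanSpace ℝ (Fin d)) × ((ℕ → Fin m) × (ℕ → Fin m)) =>
      cod A u.1 u.2.1 := hc.comp (by fun_prop : Continuous fun u : (Fin m → EuclideanSpace ℝ (Fin d)) × ((ℕ → Fin m) × (ℕ → Fin m)) => (u.1, u.2.1))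
    have c2 : Continuous fun u : (Fin m → EuclideanSpace ℝ (Fin d)) × ((ℕ → Fin m) × (ℕ → Fin m)) =>
      cod A u.1 u.2.2 := hc.comp (by fun_prop : Continuous fun u : (Fin m → EuclideanSpace ℝ (Fin d)) × ((ℕ → Fin m) × (ℕ → Fin m)) => (u.1, u.2.2))
    fun_prop
  have hInt : Integrable (fun u : (Fin m → EuclideanSpace ℝ (Fin d)) × ((ℕ → Fin m) × (ℕ → Fin m)) =>
      (gw u.1 : ℂ) * ((Real.fourierChar
        (inner ℝ ξ (cod A u.1 u.2.1) - inner ℝ ξ (cod A u.1 u.2.2)) : Circle) : ℂ))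
      (volume.prod ((bern p).prod (bern p))) := by
    have h1 : Integrable (fun u : (Fin m → EuclideanSpace ℝ (Fin d)) × ((ℕ → Fin m) × (ℕ → Fin m)) =>
        (gw u.1 : ℂ)) (volume.prod ((bern p).prod (bern p))) :=
      (gw_integrable.ofReal (𝕜 := ℂ)).comp_fst _
    refine h1.mono (h1.aestronglyMeasurable.mul hF.aestronglyMeasurable) ?_
    refine Filter.Eventually.of_forall fun u => ?_
    rw [norm_mul, Circle.norm_coe, mul_one]
  have e1 : ∀ a, ((gw a * ‖phi A p a ξ‖ ^ 2 : ℝ) : ℂ) = ∫ z : (ℕ → Fin m) × (ℕ → Fin m),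
      (gw a : ℂ) * ((Real.fourierChar
        (inner ℝ ξ (cod A a z.1) - inner ℝ ξ (cod A a z.2)) : Circle) : ℂ)
        ∂((bern p).prod (bern p)) := by
    intro a
    rw [Complex.ofReal_mul, norm_phi_sq, integral_const_mul]
  have hInt2 : Integrable fun a => gw a * ‖phi A p a ξ‖ ^ 2 := by
    have := hInt.integral_prod_left
    simp only [← e1] at this
    exact this.re
  rw [← ofReal_integral_eq_lintegral_ofReal hInt2
    (Filter.Eventually.of_forall fun a => mul_nonneg (gw_pos a).le (sq_nonneg _))]
  have e2 : ((∫ a, gw a * ‖phi A p a ξ‖ ^ 2 : ℝ) : ℂ) = ∫ z : (ℕ → Fin m) × (ℕ → Fin m),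
      (gc d ^ m * ((Real.exp (-Real.pi ^ 2 * ∑ i, ‖cf A z.1 ξ i - cf A z.2 ξ i‖ ^ 2) : ℝ) : ℂ))
        ∂((bern p).prod (bern p)) := by
    rw [← integral_complex_ofReal]
    simp only [e1]
    rw [integral_integral_swap hInt]
    refine integral_congr_ae (Filter.Eventually.of_forall fun z => ?_)
    simp only
    rw [← gauss_int]
    refine integral_congr_ae (Filter.Eventually.of_forall fun a => ?_)
    simp only
    rw [inner_cod hA hadj hρ hρ0 hρ1, inner_cod hA hadj hρ hρ0 hρ1, ← Finset.sum_sub_distrib]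
    simp only [inner_sub_left]
  have e3 : 0 ≤ ∫ a, gw a * ‖phi A p a ξ‖ ^ 2 :=
    integral_nonneg fun a => mul_nonneg (gw_pos a).le (sq_nonneg _)
  have e4 : ENNReal.ofReal (∫ a, gw a * ‖phi A p a ξ‖ ^ 2) =
      ‖((∫ a, gw a * ‖phi A p a ξ‖ ^ 2 : ℝ) : ℂ)‖ₑ := by
    rw [← ofReal_norm, Complex.norm_real, Real.norm_of_nonneg e3]
  rw [e4, e2]
  refine (enorm_integral_le_lintegral_enorm _).trans (lintegral_mono fun z => ?_)
  rw [← ofReal_norm, norm_mul, Complex.norm_real, Real.norm_of_nonneg (Real.exp_pos _).le]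

lemma kernel_le (hadj : ∀ i v, ‖ContinuousLinearMap.adjoint (A i) v‖ = r i * ‖v‖)
    (hρ : ∀ i, r i ≤ ρ) (hρ0 : 0 ≤ ρ) (hρ1 : ρ < 1 / 2) (hr0 : ∀ i, 0 < r i)
    {q : ℝ} (hq : 0 ≤ q) : ∃ C : ℝ, 0 < C ∧ ∀ (x y : ℕ → Fin m) (ξ : EuclideanSpace ℝ (Fin d)),
    ENNReal.ofReal (‖gc d ^ m‖ *
        Real.exp (-Real.pi ^ 2 * ∑ i, ‖cf A x ξ i - cf A y ξ i‖ ^ 2)) ≤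
      ENNReal.ofReal (C * (1 + ‖ξ‖) ^ (-q)) * hker r q x y := by
  set δ := 2 - 2 * (ρ / (1 - ρ)) with hδ
  have hδ0 : 0 < δ := by
    have : ρ / (1 - ρ) < 1 := by rw [div_lt_one (by linarith)]; linarith
    linarith
  set κ := Real.pi ^ 2 * δ ^ 2 / 2
  have hκ : 0 < κ := by have := Real.pi_pos; positivity
  have hg : 0 < ‖gc d ^ m‖ := by
    rw [norm_pos_iff]
    refine pow_ne_zero _ ?_
    unfold gc
    rw [Complex.cpow_ne_zero_iff]
    left
    simp [Real.pi_ne_zero]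
  refine ⟨‖gc d ^ m‖ * Real.exp (q ^ 2 / (4 * κ)), by positivity, fun x y ξ => ?_⟩
  have hr1 : ∀ i, r i ≤ 1 := fun i => by linarith [hρ i]
  have hpos : 0 < (1 + ‖ξ‖) ^ (-q) := Real.rpow_pos_of_pos (by positivity) _
  by_cases hxy : x = y
  · subst hxy
    rw [hker_diag hr0 hr1 hq, ENNReal.mul_top]
    · exact le_top
    · rw [Ne, ENNReal.ofReal_eq_zero, not_le]; positivity
  · have hex : ∃ n, x n ≠ y n := Function.ne_iff.1 hxy
    classical
    set n := Nat.find hex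
    have hn : x n ≠ y n := Nat.find_spec hex
    have hlt : ∀ k < n, x k = y k := fun k hk => not_not.1 (Nat.find_min hex hk)
    refine le_trans ?_ (mul_le_mul_right (le_hker r q hlt) _)
    rw [← ENNReal.ofReal_mul (by positivity)]
    refine ENNReal.ofReal_le_ofReal ?_
    set s := ∏ k ∈ Finset.range n, r (x k)
    have hs0 : 0 < s := Finset.prod_pos fun k _ => hr0 _
    have hs1 : s ≤ 1 := Finset.prod_le_one (fun k _ => (hr0 _).le) fun k _ => hr1 _
    have l1 := cf_lower hadj hρ hρ0 (by linarith) hlt hn ξ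
    rw [norm_adjo hadj] at l1
    have l2 := sum_sq_lower (fun i => cf A x ξ i - cf A y ξ i) hn
    have l3 : (δ * (s * ‖ξ‖)) ^ 2 ≤ ‖(cf A x ξ (x n) - cf A y ξ (x n)) -
      (cf A x ξ (y n) - cf A y ξ (y n))‖ ^ 2 := by
      gcongr
    have l4 := exp_bound hκ hq (norm_nonneg ξ) hs0 hs1
    have l5 : -Real.pi ^ 2 * ∑ i, ‖cf A x ξ i - cf A y ξ i‖ ^ 2 ≤ -κ * (s * ‖ξ‖) ^ 2 := by
      have : (δ * (s * ‖ξ‖)) ^ 2 / 2 ≤ ∑ i, ‖cf A x ξ i - cf A y ξ i‖ ^ 2 := by linarith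
      have := mul_le_mul_of_nonneg_left this (sq_nonneg Real.pi)
      simp only [κ]
      linarith
    have l6 := (Real.exp_le_exp.2 l5).trans l4
    calc _ ≤ ‖gc d ^ m‖ * (Real.exp (q ^ 2 / (4 * κ)) * (1 + ‖ξ‖) ^ (-q) * s ^ (-q)) := by gcongr
      _ = _ := by ring

lemma continuous_cod_right (hA : ∀ i v, ‖A i v‖ ≤ r i * ‖v‖) (hρ : ∀ i, r i ≤ ρ) (hρ0 : 0 ≤ ρ)
    (hρ1 : ρ < 1) (a) : Continuous fun x => cod A a x :=
  (continuous_cod hA hρ hρ0 hρ1).comp (by fun_prop : Continuous fun x : ℕ → Fin m => (a, x))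

lemma measurable_phi (hA : ∀ i v, ‖A i v‖ ≤ r i * ‖v‖) (hρ : ∀ i, r i ≤ ρ) (hρ0 : 0 ≤ ρ)
    (hρ1 : ρ < 1) (p : PMF (Fin m)) :
    Measurable fun u : EuclideanSpace ℝ (Fin d) × (Fin m → EuclideanSpace ℝ (Fin d)) =>
      phi A p u.2 u.1 := by
  have hc := continuous_cod hA hρ hρ0 hρ1
  have c1 : Continuous fun u : (EuclideanSpace ℝ (Fin d) × (Fin m → EuclideanSpace ℝ (Fin d))) ×
      (ℕ → Fin m) => cod A u.1.2 u.2 := hc.comp (by fun_prop : Continuous fun u : (EuclideanSpace ℝ (Fin d) × (Fin m → EuclideanSpace ℝ (Fin d))) ×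
      (ℕ → Fin m) => (u.1.2, u.2))
  have c2 : Continuous fun u : (EuclideanSpace ℝ (Fin d) × (Fin m → EuclideanSpace ℝ (Fin d))) ×
      (ℕ → Fin m) => ((Real.fourierChar (inner ℝ u.1.1 (cod A u.1.2 u.2)) : Circle) : ℂ) :=
    continuous_char.comp (by fun_prop)
  exact (c2.measurable.stronglyMeasurable.integral_prod_right (ν := bern p)).measurable

lemma energy_bound (hA : ∀ i v, ‖A i v‖ ≤ r i * ‖v‖)
    (hadj : ∀ i v, ‖ContinuousLinearMap.adjoint (A i) v‖ = r i * ‖v‖)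
    (hρ : ∀ i, r i ≤ ρ) (hρ0 : 0 ≤ ρ) (hρ1 : ρ < 1 / 2) (hr0 : ∀ i, 0 < r i)
    (p : PMF (Fin m)) {q : ℝ} (hq : 2 * (d : ℝ) < q)
    (hsum : ∑ i, p i ^ 2 * ENNReal.ofReal (r i ^ (-q)) < 1) :
    ∃ (C : ℝ) (M : ℝ≥0∞), 0 < C ∧ M < ∞ ∧ ∀ ξ, ∫⁻ a, ENNReal.ofReal (gw a * ‖phi A p a ξ‖ ^ 2) ≤
      ENNReal.ofReal (C * (1 + ‖ξ‖) ^ (-q)) * M := by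
  have hρ1' : ρ < 1 := by linarith
  have hq0 : 0 ≤ q := by have : (0:ℝ) ≤ d := Nat.cast_nonneg d; linarith
  obtain ⟨C, hC, hker_le⟩ := kernel_le (A := A) hadj hρ hρ0 hρ1 hr0 hq0
  refine ⟨C, ∫⁻ x, ∫⁻ y, hker r q x y ∂bern p ∂bern p, hC, ?_, fun ξ => ?_⟩
  · rw [lintegral_hker p r hr0 q, ENNReal.tsum_geometric, ENNReal.inv_lt_top]
    exact tsub_pos_of_lt hsum
  · refine (energy_le hA hadj hρ hρ0 hρ1' p ξ).trans ?_
    have e1 : ∫⁻ z : (ℕ → Fin m) × (ℕ → Fin m),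
        ENNReal.ofReal (C * (1 + ‖ξ‖) ^ (-q)) * hker r q z.1 z.2 ∂((bern p).prod (bern p)) =
        ENNReal.ofReal (C * (1 + ‖ξ‖) ^ (-q)) * ∫⁻ x, ∫⁻ y, hker r q x y ∂bern p ∂bern p := by
      rw [lintegral_const_mul _ (measurable_hker r q),
        lintegral_prod _ (measurable_hker r q).aemeasurable]
    rw [← e1]
    apply lintegral_mono
    intro z
    exact hker_le z.1 z.2 ξ

lemma measurable_phi_left (hA : ∀ i v, ‖A i v‖ ≤ r i * ‖v‖) (hρ : ∀ i, r i ≤ ρ) (hρ0 : 0 ≤ ρ)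
    (hρ1 : ρ < 1) (p : PMF (Fin m)) (a : Fin m → EuclideanSpace ℝ (Fin d)) :
    Measurable (phi A p a) := by
  have hc := continuous_cod_right hA hρ hρ0 hρ1 a
  have c2 : Continuous fun u : EuclideanSpace ℝ (Fin d) × (ℕ → Fin m) =>
      ((Real.fourierChar (inner ℝ u.1 (cod A a u.2)) : Circle) : ℂ) :=
    continuous_char.comp (by fun_prop)
  exact (c2.measurable.stronglyMeasurable.integral_prod_right (ν := bern p)).measurable

lemma integrable_phi {p : PMF (Fin m)} {q : ℝ} {a : Fin m → EuclideanSpace ℝ (Fin d)}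
    (hma : Measurable (phi A p a))
    (hJ : ∫⁻ ξ : EuclideanSpace ℝ (Fin d), ENNReal.ofReal ((1 + ‖ξ‖) ^ (-(q / 2))) < ∞)
    (ha : ∫⁻ ξ, ENNReal.ofReal ((1 + ‖ξ‖) ^ (q / 2)) *
      ENNReal.ofReal (gw a * ‖phi A p a ξ‖ ^ 2) < ∞) : Integrable (phi A p a) := by
  refine ⟨hma.aestronglyMeasurable, ?_⟩
  unfold HasFiniteIntegral
  have hb : ∀ ξ, ‖phi A p a ξ‖ₑ ≤ ENNReal.ofReal ((gw a)⁻¹) *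
      (ENNReal.ofReal ((1 + ‖ξ‖) ^ (q / 2)) * ENNReal.ofReal (gw a * ‖phi A p a ξ‖ ^ 2)) +
      ENNReal.ofReal ((1 + ‖ξ‖) ^ (-(q / 2))) := by
    intro ξ
    have g0 := gw_pos a
    have t0 : 0 < (1 + ‖ξ‖) ^ (q / 2) := Real.rpow_pos_of_pos (by positivity) _
    rw [← ofReal_norm, ← ENNReal.ofReal_mul t0.le, ← ENNReal.ofReal_mul (by positivity),
      Real.rpow_neg (by positivity), ← ENNReal.ofReal_add (by positivity) (by positivity)]
    refine ENNReal.ofReal_le_ofReal ?_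
    set t := (1 + ‖ξ‖) ^ (q / 2)
    set f := ‖phi A p a ξ‖
    have e : (gw a)⁻¹ * (t * (gw a * f ^ 2)) + t⁻¹ = t * f ^ 2 + t⁻¹ := by
      field_simp
    rw [e]
    have : t * f ^ 2 + t⁻¹ - f = t⁻¹ * ((t * f) ^ 2 + 1 - t * f) := by field_simp
    have h2 : 0 ≤ t⁻¹ * ((t * f) ^ 2 + 1 - t * f) := by
      refine mul_nonneg (by positivity) ?_
      nlinarith [sq_nonneg (t * f - 1)]
    linarith
  refine (lintegral_mono hb).trans_lt ?_
  rw [lintegral_add_right _ (by fun_prop), lintegral_const_mul' _ _ ENNReal.ofReal_ne_top]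
  exact ENNReal.add_lt_top.2 ⟨ENNReal.mul_lt_top ENNReal.ofReal_lt_top ha, hJ⟩

lemma core (hA : ∀ i v, ‖A i v‖ ≤ r i * ‖v‖)
    (hadj : ∀ i v, ‖ContinuousLinearMap.adjoint (A i) v‖ = r i * ‖v‖)
    (hρ : ∀ i, r i ≤ ρ) (hρ0 : 0 ≤ ρ) (hρ1 : ρ < 1 / 2) (hr0 : ∀ i, 0 < r i)
    (p : PMF (Fin m)) {q : ℝ} (hq : 2 * (d : ℝ) < q)
    (hsum : ∑ i, p i ^ 2 * ENNReal.ofReal (r i ^ (-q)) < 1) :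
    ∀ᵐ a ∂(volume : Measure (Fin m → EuclideanSpace ℝ (Fin d))),
      (interior (Set.range (cod A a))).Nonempty := by
  have hρ1' : ρ < 1 := by linarith
  obtain ⟨C, M, hC, hMtop, hen⟩ := energy_bound hA hadj hρ hρ0 hρ1 hr0 p hq hsum
  have hJ := finite_integral_one_add_norm (E := EuclideanSpace ℝ (Fin d)) (μ := volume)
    (r := q / 2) (by rw [finrank_euclideanSpace_fin]; linarith)
  have hmeas := measurable_phi (A := A) hA hρ hρ0 hρ1' p
  have hgm : Measurable (gw : (Fin m → EuclideanSpace ℝ (Fin d)) → ℝ) := by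
    unfold gw; fun_prop
  have hmF : Measurable fun u : EuclideanSpace ℝ (Fin d) × (Fin m → EuclideanSpace ℝ (Fin d)) =>
      ENNReal.ofReal ((1 + ‖u.1‖) ^ (q / 2)) *
        ENNReal.ofReal (gw u.2 * ‖phi A p u.2 u.1‖ ^ 2) := by
    refine Measurable.mul (by fun_prop) (ENNReal.measurable_ofReal.comp ?_)
    exact (hgm.comp measurable_snd).mul (hmeas.norm.pow_const 2)
  have hfin : ∫⁻ ξ, ∫⁻ a, ENNReal.ofReal ((1 + ‖ξ‖) ^ (q / 2)) *
      ENNReal.ofReal (gw a * ‖phi A p a ξ‖ ^ 2) < ∞ := by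
    have : ∀ ξ : EuclideanSpace ℝ (Fin d), ∫⁻ a, ENNReal.ofReal ((1 + ‖ξ‖) ^ (q / 2)) *
        ENNReal.ofReal (gw a * ‖phi A p a ξ‖ ^ 2) ≤
        (ENNReal.ofReal C * M) * ENNReal.ofReal ((1 + ‖ξ‖) ^ (-(q / 2))) := by
      intro ξ
      rw [lintegral_const_mul' _ _ ENNReal.ofReal_ne_top]
      refine (mul_le_mul_right (hen ξ) _).trans ?_
      rw [← mul_assoc, ← ENNReal.ofReal_mul (by positivity)]
      have e : (1 + ‖ξ‖) ^ (q / 2) * (C * (1 + ‖ξ‖) ^ (-q)) = C * (1 + ‖ξ‖) ^ (-(q / 2)) := by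
        rw [mul_left_comm, ← Real.rpow_add (by positivity)]
        congr 2; ring
      rw [e, ENNReal.ofReal_mul hC.le]
      apply le_of_eq; ring
    refine (lintegral_mono this).trans_lt ?_
    rw [lintegral_const_mul' _ _ (ENNReal.mul_ne_top ENNReal.ofReal_ne_top hMtop.ne)]
    exact ENNReal.mul_lt_top (ENNReal.mul_lt_top ENNReal.ofReal_lt_top hMtop) hJ
  rw [lintegral_lintegral_swap hmF.aemeasurable] at hfin
  have hml : Measurable fun a => ∫⁻ ξ, ENNReal.ofReal ((1 + ‖ξ‖) ^ (q / 2)) *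
      ENNReal.ofReal (gw a * ‖phi A p a ξ‖ ^ 2) := by
    exact Measurable.lintegral_prod_left' hmF
  have hae : ∀ᵐ a, ∫⁻ ξ, ENNReal.ofReal ((1 + ‖ξ‖) ^ (q / 2)) *
      ENNReal.ofReal (gw a * ‖phi A p a ξ‖ ^ 2) < ∞ := ae_lt_top hml hfin.ne
  filter_upwards [hae] with a ha
  have hcr := continuous_cod_right (A := A) hA hρ hρ0 hρ1' a
  have hma : Measurable (phi A p a) := measurable_phi_left hA hρ hρ0 hρ1' p a
  have hInt : Integrable (phi A p a) := integrable_phi hma hJ ha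
  have hcompact : IsCompact (Set.range (cod A a)) := isCompact_range hcr
  have hmc : Measurable (cod A a) := hcr.measurable
  exact interior_nonempty_of_integrable_char (bern p) (cod A a) hmc hInt hcompact
    fun x => Set.mem_range_self x

end Part4

section Part5
variable {d m : ℕ}

lemma codingMap_eq_cod (T : Fin m → Matrix (Fin d) (Fin d) ℝ)
    (a : Fin m → EuclideanSpace ℝ (Fin d)) (x : ℕ → Fin m) :
    codingMap T a x = cod (fun i => Matrix.toEuclideanCLM (𝕜 := ℝ) (T i)) a x := by
  have h : ∀ n, Matrix.toEuclideanCLM (𝕜 := ℝ) (wordProd T fun k : Fin n => x (k : ℕ)) =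
      pre (fun i => Matrix.toEuclideanCLM (𝕜 := ℝ) (T i)) x n := by
    intro n
    induction n with
    | zero => simp [wordProd, pre]
    | succ n ih =>
      rw [pre, ← ih, ← map_mul]
      congr 1
      simp only [wordProd]
      rw [List.ofFn_succ', List.concat_eq_append, List.prod_append]
      simp
  simp only [codingMap, cod, h]

lemma exists_exponent (r : Fin m → ℝ) (hr0 : ∀ i, 0 < r i) (hsum : 1 < ∑ i, r i ^ (2 * d)) :
    ∃ q : ℝ, 2 * (d : ℝ) < q ∧
      ∑ i, (r i ^ (2 * d) / ∑ j, r j ^ (2 * d)) ^ 2 * r i ^ (-q) < 1 := by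
  set S := ∑ j, r j ^ (2 * d)
  have hc : Continuous fun q : ℝ => ∑ i, (r i ^ (2 * d) / S) ^ 2 * r i ^ (-q) := by
    refine continuous_finsetSum _ fun i _ => continuous_const.mul ?_
    exact Continuous.rpow continuous_const continuous_neg fun _ => Or.inl (hr0 i).ne'
  have h0 : ∑ i, (r i ^ (2 * d) / S) ^ 2 * r i ^ (-(2 * (d : ℝ))) < 1 := by
    have : ∀ i, (r i ^ (2 * d) / S) ^ 2 * r i ^ (-(2 * (d : ℝ))) = r i ^ (2 * d) / S ^ 2 := by
      intro i
      rw [Real.rpow_neg (hr0 i).le,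
        show (2 * (d : ℝ)) = ((2 * d : ℕ) : ℝ) by push_cast; ring, Real.rpow_natCast]
      have := pow_pos (hr0 i) (2 * d)
      field_simp
    simp only [this]
    rw [← Finset.sum_div]
    change S / S ^ 2 < 1
    rw [div_lt_one (by positivity)]
    nlinarith
  have h1 : ∀ᶠ q in nhdsWithin (2 * (d : ℝ)) (Set.Ioi (2 * (d : ℝ))),
      ∑ i, (r i ^ (2 * d) / S) ^ 2 * r i ^ (-q) < 1 :=
    (hc.continuousAt.eventually_lt continuousAt_const h0).filter_mono nhdsWithin_le_nhds
  obtain ⟨q, hq1, hq2⟩ := (h1.and self_mem_nhdsWithin).exists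
  exact ⟨q, hq2, hq1⟩

lemma norm_toEuclideanCLM_orth {O : Matrix (Fin d) (Fin d) ℝ}
    (hO : O ∈ Matrix.orthogonalGroup (Fin d) ℝ) (v : EuclideanSpace ℝ (Fin d)) :
    ‖Matrix.toEuclideanCLM (𝕜 := ℝ) O v‖ = ‖v‖ := by
  have : Matrix.toEuclideanCLM (𝕜 := ℝ) O ∈
      unitary (EuclideanSpace ℝ (Fin d) →L[ℝ] EuclideanSpace ℝ (Fin d)) :=
    Unitary.map_mem (Matrix.toEuclideanCLM (𝕜 := ℝ) (n := Fin d)) hO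
  exact ContinuousLinearMap.norm_map_of_mem_unitary this v

lemma abs_det_orth {O : Matrix (Fin d) (Fin d) ℝ}
    (hO : O ∈ Matrix.orthogonalGroup (Fin d) ℝ) : |O.det| = 1 := by
  have h := Matrix.det_of_mem_unitary hO
  have h2 := (Unitary.mem_iff.1 h).1
  simp only [star_trivial] at h2
  rcases mul_self_eq_one_iff.1 h2 with h | h <;> simp [h]

end Part5

/-- **Corollary 1.2(ii).** If `‖T_i‖ < 1/2` for all `i`, each `T_i` is a scalar multiple
of an orthogonal matrix, and `∑_i |det T_i|² > 1`, then for Lebesgue-a.e. `a ∈ ℝ^{md}`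
the self-affine set `K^a` has non-empty interior. -/
theorem typical_selfAffine_nonempty_interior_of_scalar_orthogonal
    (T : Fin m → Matrix (Fin d) (Fin d) ℝ)
    (hinv : ∀ i, IsUnit (T i).det)
    (hnorm : ∀ i, opNorm (T i) < 1 / 2)
    (horth : ∀ i, ∃ (c : ℝ) (O : Matrix (Fin d) (Fin d) ℝ),
      O ∈ Matrix.orthogonalGroup (Fin d) ℝ ∧ T i = c • O)
    (hsum : 1 < ∑ i : Fin m, |(T i).det| ^ 2) :
    ∀ᵐ a ∂(volume : Measure (Fin m → EuclideanSpace ℝ (Fin d))),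
      (interior (attractor T a)).Nonempty := by
  rcases Nat.eq_zero_or_pos d with hd | hd
  · subst hd
    have hm : 0 < m := by
      rcases Nat.eq_zero_or_pos m with h | h
      · subst h; simp at hsum; linarith
      · exact h
    refine Filter.Eventually.of_forall fun a => ?_
    have : attractor T a = Set.univ :=
      Set.eq_univ_of_forall fun v => ⟨fun _ => ⟨0, hm⟩, Subsingleton.elim _ _⟩
    rw [this, interior_univ]
    exact ⟨0, trivial⟩
  choose c O hO hT using horth
  have hA : ∀ i v, ‖Matrix.toEuclideanCLM (𝕜 := ℝ) (T i) v‖ = |c i| * ‖v‖ := by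
    intro i v
    rw [hT i, map_smul, smul_apply, norm_smul,
      norm_toEuclideanCLM_orth (hO i), Real.norm_eq_abs]
  have hadj : ∀ i v, ‖ContinuousLinearMap.adjoint
      (Matrix.toEuclideanCLM (𝕜 := ℝ) (T i)) v‖ = |c i| * ‖v‖ := by
    intro i v
    rw [← ContinuousLinearMap.star_eq_adjoint, ← map_star, hT i, star_smul, map_smul,
      smul_apply, norm_smul,
      norm_toEuclideanCLM_orth (Unitary.star_mem (hO i)), star_trivial, Real.norm_eq_abs]
  have hdet : ∀ i, |(T i).det| = |c i| ^ d := by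
    intro i
    rw [hT i, Matrix.det_smul, abs_mul, abs_det_orth (hO i), mul_one, abs_pow, Fintype.card_fin]
  have hr0 : ∀ i, 0 < |c i| := by
    intro i
    rw [abs_pos]
    intro h0
    have := hdet i
    rw [h0, abs_zero, zero_pow hd.ne', abs_eq_zero] at this
    exact (hinv i).ne_zero this
  have hr2 : ∀ i, |c i| < 1 / 2 := by
    intro i
    refine lt_of_le_of_lt ?_ (hnorm i)
    have h1 := (Matrix.toEuclideanCLM (𝕜 := ℝ) (T i)).le_opNorm
      (EuclideanSpace.single (⟨0, hd⟩ : Fin d) (1 : ℝ))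
    rw [hA] at h1
    simpa [opNorm] using h1
  have hs : 1 < ∑ i, |c i| ^ (2 * d) := by
    refine lt_of_lt_of_eq hsum (Finset.sum_congr rfl fun i _ => ?_)
    rw [hdet, ← pow_mul, mul_comm d 2]
  obtain ⟨ρ, hρ0, hρ1, hρ⟩ : ∃ ρ : ℝ, 0 ≤ ρ ∧ ρ < 1 / 2 ∧ ∀ i, |c i| ≤ ρ := by
    have hne : (Finset.univ : Finset (Fin m)).Nonempty := by
      rw [Finset.nonempty_iff_ne_empty]
      intro h
      rw [h, Finset.sum_empty] at hs
      linarith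
    obtain ⟨i, -, hi⟩ := Finset.exists_max_image Finset.univ (fun i => |c i|) hne
    exact ⟨|c i|, (hr0 i).le, hr2 i, fun j => hi j (Finset.mem_univ j)⟩
  obtain ⟨q, hq, hqs⟩ := exists_exponent (d := d) (fun i => |c i|) hr0 hs
  set S := ∑ j, |c j| ^ (2 * d) with hS
  have hS0 : 0 < S := by linarith
  have hp0 : ∀ i, 0 ≤ |c i| ^ (2 * d) / S := fun i => by positivity
  let p : PMF (Fin m) := PMF.ofFintype (fun i => ENNReal.ofReal (|c i| ^ (2 * d) / S)) (by
    rw [← ENNReal.ofReal_sum_of_nonneg fun i _ => hp0 i, ← Finset.sum_div, ← hS,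
      div_self hS0.ne', ENNReal.ofReal_one])
  have hps : ∑ i, p i ^ 2 * ENNReal.ofReal (|c i| ^ (-q)) < 1 := by
    have : ∀ i, p i ^ 2 * ENNReal.ofReal (|c i| ^ (-q)) =
        ENNReal.ofReal ((|c i| ^ (2 * d) / S) ^ 2 * |c i| ^ (-q)) := by
      intro i
      rw [ENNReal.ofReal_mul (by positivity), ENNReal.ofReal_pow (hp0 i)]
      rfl
    simp only [this]
    rw [← ENNReal.ofReal_sum_of_nonneg fun i _ =>
      mul_nonneg (sq_nonneg _) (Real.rpow_nonneg (abs_nonneg _) _), ENNReal.ofReal_lt_one]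
    exact hqs
  have := core (fun i v => (hA i v).le) hadj hρ hρ0 hρ1 hr0 p hq hps
  filter_upwards [this] with a ha
  have e : attractor T a = Set.range (cod (fun i => Matrix.toEuclideanCLM (𝕜 := ℝ) (T i)) a) := by
    unfold attractor
    congr 1
    exact funext fun x => codingMap_eq_cod T a x
  rw [e]
  exact ha

end SelfAffine
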